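/- Let X be an emetric space, let ψ : X → X be a bijection which is Lipschitz with constant K, with K ≥ 1, and let L ⊆ X be a subset. Then the Hausdorff extended distance between L and ψ(L) satisfies hausdorffEdist(L, ψ(L)) ≤ K · max( sup_{x ∈ L} infEdist(x, ψ(L)), sup_{x ∈ L} infEdist(x, ψ⁻¹(L)) ), where ψ⁻¹(L) denotes the preimage of L under ψ. -/

import Mathlib

open EMetric

/-- For a Lipschitz bijection `ψ` with constant `K ≥ 1`, the Hausdorff extended distance
between `L` and `ψ(L)` is at most `K` times the maximum of the one-sided Hausdorff distances
of `L` from `ψ(L)` and of `L` from `ψ⁻¹(L)`. -/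
theorem hausdorffEdist_image_le
    {X : Type*} [EMetricSpace X] {ψ : X → X} {K : NNReal}
    (hbij : Function.Bijective ψ) (hψ : LipschitzWith K ψ) (hK : 1 ≤ K) (L : Set X) :
    hausdorffEdist L (ψ '' L) ≤
      K * max (⨆ x ∈ L, infEdist x (ψ '' L)) (⨆ x ∈ L, infEdist x (ψ ⁻¹' L)) := by
  have hK1 : (1 : ENNReal) ≤ K := by exact_mod_cast hK
  have hK0 : (K : ENNReal) ≠ 0 := (lt_of_lt_of_le zero_lt_one hK1).ne'
  change Metric.hausdorffEDist L (ψ '' L) ≤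
    K * max (⨆ x ∈ L, Metric.infEDist x (ψ '' L)) (⨆ x ∈ L, Metric.infEDist x (ψ ⁻¹' L))
  apply Metric.hausdorffEDist_le_of_infEDist
  · intro x hx
    calc Metric.infEDist x (ψ '' L) ≤ ⨆ x ∈ L, Metric.infEDist x (ψ '' L) :=
          le_iSup₂ (f := fun x (_ : x ∈ L) => Metric.infEDist x (ψ '' L)) x hx
      _ ≤ max (⨆ x ∈ L, Metric.infEDist x (ψ '' L)) (⨆ x ∈ L, Metric.infEDist x (ψ ⁻¹' L)) :=
          le_max_left _ _
      _ ≤ _ := le_mul_of_one_le_left' hK1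
  · rintro _ ⟨x, hx, rfl⟩
    have key : Metric.infEDist (ψ x) L / K ≤ Metric.infEDist x (ψ ⁻¹' L) := by
      rw [Metric.le_infEDist]
      intro y hy
      exact ENNReal.div_le_of_le_mul'
        ((Metric.infEDist_le_edist_of_mem (Set.mem_preimage.1 hy)).trans (hψ x y))
    have key2 : Metric.infEDist (ψ x) L ≤ K * Metric.infEDist x (ψ ⁻¹' L) := by
      rw [ENNReal.div_le_iff' hK0 ENNReal.coe_ne_top] at key
      exact key
    refine key2.trans ?_
    gcongr
    exact (le_iSup₂ (f := fun x (_ : x ∈ L) => Metric.infEDist x (ψ ⁻¹' L)) x hx).trans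
      (le_max_right _ _)
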